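/- Let k_1 ≥ k_2 ≥ 2 be integers and set κ = k_1² + k_2²(k_2 − 1)/2. Then S_U(k_1, k_2) ≤ κ(lg κ + lg lg κ + 1), where lg denotes the base-2 logarithm. -/

import Mathlib

/-- The multiset of all `s`-gapped subsequences of a binary string (all lengths,
including the empty subsequence), counted with multiplicity over index choices:
consecutive chosen indices must differ by at least `s`. -/
def gappedSubseqs (s : ℕ) : List Bool → Multiset (List Bool)
  | [] => {[]}
  | a :: l => gappedSubseqs s l + (gappedSubseqs s (l.drop (s - 1))).map (a :: ·)
termination_by x => x.length
decreasing_by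
  · simp
  · simp only [List.length_drop, List.length_cons]; omega

/-- The `s`-gapped `k`-deck: all `s`-gapped subsequences of length between 1 and `k`. -/
def gDeck (s k : ℕ) (x : List Bool) : Multiset (List Bool) :=
  (gappedSubseqs s x).filter (fun w => 1 ≤ w.length ∧ w.length ≤ k)

/-- The exact `s`-gapped `k`-deck: all `s`-gapped subsequences of length exactly `k`. -/
def dDeck (s k : ℕ) (x : List Bool) : Multiset (List Bool) :=
  (gappedSubseqs s x).filter (fun w => w.length = k)

/-- The classical (ungapped) `k`-deck: the multiset of all length-`k` subsequences. -/
def deck (k : ℕ) (x : List Bool) : Multiset (List Bool) :=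
  (gappedSubseqs 1 x).filter (fun w => w.length = k)

/-- The gapped `k`-deck `B^(k)` (gap `2`). -/
def Bdeck (k : ℕ) (x : List Bool) : Multiset (List Bool) := gDeck 2 k x

/-- `B_L^(k)`: the gapped `k`-deck of the string punctured on the left. -/
def BLdeck (k : ℕ) (x : List Bool) : Multiset (List Bool) := Bdeck k x.tail

/-- `B_R^(k)`: the gapped `k`-deck of the string punctured on the right. -/
def BRdeck (k : ℕ) (x : List Bool) : Multiset (List Bool) := Bdeck k x.dropLast

/-- `B_LR^(k)`: the gapped `k`-deck of the string punctured on both ends. -/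
def BLRdeck (k : ℕ) (x : List Bool) : Multiset (List Bool) := Bdeck k x.tail.dropLast

/-- `S(k)`: the smallest positive `n` such that two distinct binary strings of
length `n` share the same `k`-deck. -/
noncomputable def Sval (k : ℕ) : ℕ :=
  sInf {n | 0 < n ∧ ∃ x y : List Bool, x.length = n ∧ y.length = n ∧ x ≠ y ∧
    deck k x = deck k y}

/-- `G(k)`: the smallest positive `n` such that two distinct binary strings of
length `n` share the same gapped `k`-deck. -/
noncomputable def Gval (k : ℕ) : ℕ :=
  sInf {n | 0 < n ∧ ∃ x y : List Bool, x.length = n ∧ y.length = n ∧ x ≠ y ∧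
    Bdeck k x = Bdeck k y}

/-- `G_s(k)`: the smallest positive `n` such that two distinct binary strings of
length `n` share the same `s`-gapped `k`-deck. -/
noncomputable def Gs (s k : ℕ) : ℕ :=
  sInf {n | 0 < n ∧ ∃ x y : List Bool, x.length = n ∧ y.length = n ∧ x ≠ y ∧
    gDeck s k x = gDeck s k y}

/-- `G*(k)`: the smallest positive `n` such that two distinct binary strings of
length `n` share the same gapped `k`-deck, also after puncturing on the left,
right and both sides. -/
noncomputable def Gstar (k : ℕ) : ℕ :=
  sInf {n | 0 < n ∧ ∃ x y : List Bool, x.length = n ∧ y.length = n ∧ x ≠ y ∧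
    Bdeck k x = Bdeck k y ∧ BLdeck k x = BLdeck k y ∧
    BRdeck k x = BRdeck k y ∧ BLRdeck k x = BLRdeck k y}

mutual
/-- Morse-Thue string `x^(k+1)` (index shifted: `mtX 0 = x^(1) = (0,1)`). -/
def mtX : ℕ → List Bool
  | 0 => [false, true]
  | k + 1 => mtX k ++ mtY k
/-- Morse-Thue string `y^(k+1)` (index shifted: `mtY 0 = y^(1) = (1,0)`). -/
def mtY : ℕ → List Bool
  | 0 => [true, false]
  | k + 1 => mtY k ++ mtX k
end

mutual
/-- Padded Morse-Thue string `x^(k+1)` (index shifted: `px 0 = x^(1) = (0,0,1,0)`). -/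
def px : ℕ → List Bool
  | 0 => [false, false, true, false]
  | k + 1 => [false] ++ px k ++ [false, false] ++ py k ++ [false]
/-- Padded Morse-Thue string `y^(k+1)` (index shifted: `py 0 = y^(1) = (0,1,0,0)`). -/
def py : ℕ → List Bool
  | 0 => [false, true, false, false]
  | k + 1 => [false] ++ py k ++ [false, false] ++ px k ++ [false]
end

/-- Interleaving `(z₁,x₁,z₂,x₂,…,z_{k-1},x_{k-1},z_k)` of `z` and `x`
(used with `|z| = |x| + 1`). -/
def interleave : List Bool → List Bool → List Bool
  | z, [] => z
  | [], _ :: _ => []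
  | a :: l, b :: m => a :: b :: interleave l m

/-- `N(w, p)`: the number of occurrences of the wildcard string `w`
(entries `none` are wildcards `J`, `some b` is a letter of `Γ = {X, Y}`)
as a subsequence of `p`, each wildcard matching either letter. -/
def Nw : List (Option Bool) → List Bool → ℕ
  | [], _ => 1
  | _ :: _, [] => 0
  | a :: w, b :: p =>
      Nw (a :: w) p + if a = none ∨ a = some b then Nw w p else 0

/-- `U_r(k)`: wildcard strings of length between `r` and `k` with exactly `r`
non-wildcard symbols. -/
def Ur (r k : ℕ) : Set (List (Option Bool)) :=
  {w | r ≤ w.length ∧ w.length ≤ k ∧ w.countP (fun a => a.isSome) = r}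

/-- `U(k₁, k₂) = U₁(k₁) ∪ U₂(k₂)`. -/
def Uset (k1 k2 : ℕ) : Set (List (Option Bool)) := Ur 1 k1 ∪ Ur 2 k2

/-- `p ∼^{U(k₁,k₂)} q`: `N(w,p) = N(w,q)` for all `w ∈ U(k₁,k₂)`. -/
def equivU (k1 k2 : ℕ) (p q : List Bool) : Prop :=
  ∀ w ∈ Uset k1 k2, Nw w p = Nw w q

/-- `S_U(k₁,k₂)`: the smallest `m` for which two distinct strings
`p, q ∈ Γ^m` satisfy `p ∼^{U(k₁,k₂)} q`. -/
noncomputable def SU (k1 k2 : ℕ) : ℕ :=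
  sInf {m | ∃ p q : List Bool, p.length = m ∧ q.length = m ∧ p ≠ q ∧
    equivU k1 k2 p q}

/-- `h_{x,y}(p)`: replace each letter of `p` (`false = X`, `true = Y`) by `x`
resp. `y` padded with one `0` at each end. -/
def hxy (x y : List Bool) (p : List Bool) : List Bool :=
  (p.map (fun b => [false] ++ (if b then y else x) ++ [false])).flatten

/-!
Inserting one wildcard into `w` in all possible ways expresses `p.length * Nw w p` through counts of
wildcard strings that are one symbol longer. Between strings `p` and `q` of equal length, this lets
one remove the trailing wildcards of `w` at the price of wildcards further to the left; moreover, a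
letter `X` can be traded for `Y` and `J`. Hence `p ∼ q` only requires agreement on the strings
`J^j Y` and `J^a Y J^b Y`. On strings of length `m` the counts of these take at most
`m ^ ((k₁ + 1).choose 2 + k₂ * k₂.choose 2)` joint values, so two distinct strings agree on all of
them as soon as this number is less than `2 ^ m`.
-/

section InsertIdx

variable {α : Type*}

theorem insertIdx_append_of_le_length {l₁ l₂ : List α} {i : ℕ} (a : α) (h : i ≤ l₁.length) :
    (l₁ ++ l₂).insertIdx i a = l₁.insertIdx i a ++ l₂ := by
  induction l₁ generalizing i with
  | nil => simp_all
  | cons b l₁ ih => cases i <;> simp_all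

theorem insertIdx_append_length_add (l₁ l₂ : List α) (i : ℕ) (a : α) :
    (l₁ ++ l₂).insertIdx (l₁.length + i) a = l₁ ++ l₂.insertIdx i a := by
  induction l₁ with
  | nil => simp
  | cons b l₁ ih => simpa [Nat.add_right_comm] using ih

theorem insertIdx_replicate_self {n i : ℕ} (a : α) (h : i ≤ n) :
    (List.replicate n a).insertIdx i a = List.replicate (n + 1) a := by
  induction n generalizing i with
  | zero => simp_all
  | succ n ih => cases i <;> simp_all [List.replicate_succ]

end InsertIdx

theorem Nw_replicate_none (n : ℕ) (p : List Bool) :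
    Nw (List.replicate n none) p = p.length.choose n := by
  induction p generalizing n with
  | nil => cases n <;> simp [Nw, List.replicate_succ]
  | cons b p ih =>
    cases n with
    | zero => simp [Nw]
    | succ n =>
      have ih' := ih (n + 1)
      rw [List.replicate_succ] at ih' ⊢
      simp [Nw, ih', ih, Nat.choose_succ_succ, add_comm]

theorem Nw_le_choose (w : List (Option Bool)) (p : List Bool) :
    Nw w p ≤ p.length.choose w.length := by
  induction p generalizing w with
  | nil => cases w <;> simp [Nw]
  | cons b p ih =>
    cases w with
    | nil => simp [Nw]
    | cons a w =>
      have hskip := ih (a :: w)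
      have huse := ih w
      simp only [List.length_cons] at hskip
      simp only [Nw, List.length_cons, Nat.choose_succ_succ']
      split_ifs <;> omega

theorem Nw_append_none_cons (u v : List (Option Bool)) (p : List Bool) :
    Nw (u ++ none :: v) p = Nw (u ++ some true :: v) p + Nw (u ++ some false :: v) p := by
  induction p generalizing u with
  | nil => cases u <;> simp [Nw]
  | cons b p ih =>
    cases u with
    | nil =>
      have ih' := ih []
      simp only [List.nil_append] at ih'
      cases b <;> simp [Nw, ih'] <;> ring
    | cons a u =>
      have hskip := ih (a :: u)
      simp only [List.cons_append] at hskip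
      simp only [List.cons_append, Nw, hskip, ih u]
      split_ifs <;> ring

/-- Double counting of the pairs consisting of an occurrence of `w` in `p` and a position of `p`,
which is either used by that occurrence or turns it into an occurrence of `w` with one more `J`. -/
theorem sum_Nw_insertIdx_none (w : List (Option Bool)) (p : List Bool) :
    ∑ i ∈ Finset.range (w.length + 1), Nw (w.insertIdx i none) p + w.length * Nw w p =
      p.length * Nw w p := by
  induction p generalizing w with
  | nil =>
    cases w with
    | nil => simp [Nw]
    | cons a w => simp [Finset.sum_range_succ', Nw]
  | cons b p ih =>
    cases w with
    | nil =>
      have ih' := ih []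
      simp_all [Nw]
    | cons a w =>
      have hskip := ih (a :: w)
      have huse := ih w
      simp only [List.length_cons, Finset.sum_range_succ' _ (w.length + 1),
        List.insertIdx_succ_cons, List.insertIdx_zero, Nw, Finset.sum_add_distrib, true_or,
        if_true] at hskip ⊢
      split_ifs
      · linarith
      · simp only [Finset.sum_const_zero]
        linarith

theorem sum_Nw_insertIdx_append_replicate_none (u : List (Option Bool)) (c : ℕ) (p : List Bool) :
    ∑ i ∈ Finset.range u.length, Nw (u.insertIdx i none ++ List.replicate c none) p +
        (c + 1) * Nw (u ++ List.replicate (c + 1) none) p +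
        (u.length + c) * Nw (u ++ List.replicate c none) p =
      p.length * Nw (u ++ List.replicate c none) p := by
  have hleft : ∀ i ∈ Finset.range u.length,
      Nw ((u ++ List.replicate c none).insertIdx i none) p =
        Nw (u.insertIdx i none ++ List.replicate c none) p := fun i hi => by
    rw [insertIdx_append_of_le_length _ (Finset.mem_range.1 hi).le]
  have hright : ∀ i ∈ Finset.range (c + 1),
      Nw ((u ++ List.replicate c none).insertIdx (u.length + i) none) p =
        Nw (u ++ List.replicate (c + 1) none) p := fun i hi => by
    rw [insertIdx_append_length_add, insertIdx_replicate_self _ (Finset.mem_range_succ_iff.1 hi)]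
  rw [← sum_Nw_insertIdx_none, List.length_append, List.length_replicate, add_assoc u.length,
    Finset.sum_range_add, Finset.sum_congr rfl hleft, Finset.sum_congr rfl hright,
    Finset.sum_const, Finset.card_range, smul_eq_mul]

theorem mem_Ur_iff {r k : ℕ} {w : List (Option Bool)} :
    w ∈ Ur r k ↔ w.length ≤ k ∧ w.countP (fun a => a.isSome) = r :=
  ⟨fun ⟨_, hk, hr⟩ => ⟨hk, hr⟩, fun ⟨hk, hr⟩ => ⟨hr ▸ List.countP_le_length, hk, hr⟩⟩

theorem eq_replicate_none_of_countP_isSome_eq_zero {w : List (Option Bool)}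
    (h : w.countP (fun a => a.isSome) = 0) : w = List.replicate w.length none :=
  List.eq_replicate_iff.2 ⟨rfl, fun b hb => by simpa using List.countP_eq_zero.1 h b hb⟩

theorem exists_eq_set_replicate_none {v : List (Option Bool)} (hv : some false ∉ v)
    (h : v.countP (fun a => a.isSome) = 1) :
    ∃ a < v.length, v = (List.replicate v.length none).set a (some true) := by
  induction v with
  | nil => simp at h
  | cons c v ih =>
    rcases c with - | - | -
    · obtain ⟨a, ha, hva⟩ := ih (by simp_all) (by simpa using h)
      exact ⟨a + 1, by simpa using ha, by simpa [List.replicate_succ] using hva⟩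
    · simp at hv
    · have hv0 := eq_replicate_none_of_countP_isSome_eq_zero (w := v) (by simpa using h)
      exact ⟨0, by simp, by simpa [List.replicate_succ] using hv0⟩

theorem exists_eq_concat_some_append_replicate_none {w : List (Option Bool)}
    (h : w.countP (fun a => a.isSome) ≠ 0) :
    ∃ v x c, w = v ++ [some x] ++ List.replicate c none := by
  induction w using List.reverseRecOn with
  | nil => simp at h
  | append_singleton w a ih =>
    cases a with
    | none =>
      obtain ⟨v, x, c, hw⟩ := ih (by simpa using h)
      exact ⟨v, x, c + 1, by rw [List.replicate_succ', ← List.append_assoc, ← hw]⟩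
    | some x => exact ⟨w, x, 0, by simp⟩

section Determination

variable {p q : List Bool}

theorem Nw_append_replicate_none_eq (hpq : p.length = q.length) {S : Set (List (Option Bool))}
    (hS : ∀ v ∈ S, ∀ i ≤ v.length, v.insertIdx i none ∈ S) {k : ℕ} {a : Option Bool}
    (h : ∀ v ∈ S, v.length < k → Nw (v ++ [a]) p = Nw (v ++ [a]) q) (c : ℕ) :
    ∀ v ∈ S, v.length + c < k →
      Nw (v ++ [a] ++ List.replicate c none) p = Nw (v ++ [a] ++ List.replicate c none) q := by
  induction c with
  | zero => simpa using h
  | succ c ih =>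
    intro v hv hk
    have hsum :
        ∑ i ∈ Finset.range (v ++ [a]).length,
            Nw ((v ++ [a]).insertIdx i none ++ List.replicate c none) p =
          ∑ i ∈ Finset.range (v ++ [a]).length,
            Nw ((v ++ [a]).insertIdx i none ++ List.replicate c none) q := by
      refine Finset.sum_congr rfl fun i hi => ?_
      have hi : i ≤ v.length := by simpa [Nat.lt_succ_iff] using hi
      rw [insertIdx_append_of_le_length _ hi]
      exact ih _ (hS v hv i hi) (by rw [List.length_insertIdx_of_le_length hi]; omega)
    have hp := sum_Nw_insertIdx_append_replicate_none (v ++ [a]) c p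
    have hq := sum_Nw_insertIdx_append_replicate_none (v ++ [a]) c q
    rw [hsum, ih v hv (by omega), hpq] at hp
    exact Nat.eq_of_mul_eq_mul_left c.succ_pos (by rw [Nat.succ_eq_add_one]; omega)

theorem Nw_eq_of_some_false_notMem {r k : ℕ} (hr : ∀ w ∈ Ur r k, Nw w p = Nw w q)
    (h : ∀ w ∈ Ur (r + 1) k, some false ∉ w → Nw w p = Nw w q) :
    ∀ w ∈ Ur (r + 1) k, Nw w p = Nw w q := by
  intro w
  induction hn : w.count (some false) generalizing w with
  | zero => exact fun hw => h w hw (List.count_eq_zero.1 hn)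
  | succ n ih =>
    intro hw
    have hmem : some false ∈ w := List.count_pos_iff.1 (by omega)
    obtain ⟨u, v, rfl⟩ := List.append_of_mem hmem
    have hnone : Nw (u ++ none :: v) p = Nw (u ++ none :: v) q :=
      hr _ (by simp_all [mem_Ur_iff]; omega)
    have htrue : Nw (u ++ some true :: v) p = Nw (u ++ some true :: v) q :=
      ih _ (by simp_all; omega) (by simp_all [mem_Ur_iff])
    rw [Nw_append_none_cons, Nw_append_none_cons, htrue] at hnone
    exact Nat.add_left_cancel hnone

theorem Nw_eq_of_mem_Ur_zero (hpq : p.length = q.length) {k : ℕ} :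
    ∀ w ∈ Ur 0 k, Nw w p = Nw w q := by
  intro w hw
  rw [eq_replicate_none_of_countP_isSome_eq_zero (mem_Ur_iff.1 hw).2, Nw_replicate_none,
    Nw_replicate_none, hpq]

theorem Nw_eq_of_mem_Ur_succ (hpq : p.length = q.length) {r k : ℕ}
    (hr : ∀ w ∈ Ur r k, Nw w p = Nw w q)
    (h : ∀ v : List (Option Bool), some false ∉ v → v.countP (fun a => a.isSome) = r →
      v.length < k → Nw (v ++ [some true]) p = Nw (v ++ [some true]) q) :
    ∀ w ∈ Ur (r + 1) k, Nw w p = Nw w q := by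
  refine Nw_eq_of_some_false_notMem hr fun w hw hfalse => ?_
  obtain ⟨hk, hcount⟩ := mem_Ur_iff.1 hw
  obtain ⟨v, x, c, rfl⟩ :=
    exists_eq_concat_some_append_replicate_none (w := w) (by omega)
  obtain rfl : x = true := by cases x <;> simp_all
  let S : Set (List (Option Bool)) := {v | some false ∉ v ∧ v.countP (fun a => a.isSome) = r}
  have hS : ∀ v ∈ S, ∀ i ≤ v.length, v.insertIdx i none ∈ S := by
    rintro v ⟨hvfalse, hvcount⟩ i hi
    exact ⟨by simpa [List.mem_insertIdx hi] using hvfalse,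
      by simpa [(List.perm_insertIdx none v hi).countP_eq] using hvcount⟩
  refine Nw_append_replicate_none_eq hpq hS (fun v hv => h v hv.1 hv.2) c v ⟨?_, ?_⟩ ?_
  · simp_all
  · simpa [List.countP_replicate] using hcount
  · simp only [List.length_append, List.length_singleton, List.length_replicate] at hk
    omega

end Determination

/-- Index set of the wildcard strings `J^j Y` with `j < k1` and `J^a Y J^b Y` of length at most
`k2`; the latter are indexed by the (zero-based) positions `n` and `a < n` of their two letters. -/
abbrev GeneratorIndex (k1 k2 : ℕ) : Type := Fin k1 ⊕ (Σ n : Fin k2, Fin n)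

/-- The wildcard strings on which agreement of two strings of equal length forces them to be
related by `equivU k1 k2`. The letter `Y` is `some true`. -/
def generator (k1 k2 : ℕ) : GeneratorIndex k1 k2 → List (Option Bool)
  | .inl j => List.replicate j none ++ [some true]
  | .inr ⟨n, a⟩ => (List.replicate n none).set a (some true) ++ [some true]

theorem equivU_of_generator {p q : List Bool} {k1 k2 : ℕ} (h21 : k2 ≤ k1)
    (hpq : p.length = q.length)
    (h : ∀ d, Nw (generator k1 k2 d) p = Nw (generator k1 k2 d) q) : equivU k1 k2 p q := by
  have hone : ∀ w ∈ Ur 1 k1, Nw w p = Nw w q := by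
    refine Nw_eq_of_mem_Ur_succ hpq (Nw_eq_of_mem_Ur_zero hpq) fun v _ hcount hk => ?_
    rw [eq_replicate_none_of_countP_isSome_eq_zero hcount]
    exact h (.inl ⟨v.length, hk⟩)
  have htwo : ∀ w ∈ Ur 2 k2, Nw w p = Nw w q := by
    refine Nw_eq_of_mem_Ur_succ hpq (fun w hw => hone w ⟨hw.1, hw.2.1.trans h21, hw.2.2⟩)
      fun v hfalse hcount hk => ?_
    obtain ⟨a, ha, hv⟩ := exists_eq_set_replicate_none hfalse hcount
    rw [hv]
    exact h (.inr ⟨⟨v.length, hk⟩, ⟨a, ha⟩⟩)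
  exact fun w hw => hw.elim (hone w) (htwo w)

theorem exists_ne_forall_Nw_eq {ι : Type*} [Fintype ι] (w : ι → List (Option Bool)) {m : ℕ}
    (h : ∏ i, (m.choose (w i).length + 1) < 2 ^ m) :
    ∃ p q : List Bool, p.length = m ∧ q.length = m ∧ p ≠ q ∧ ∀ i, Nw (w i) p = Nw (w i) q := by
  classical
  let counts (p : List.Vector Bool m) (i : ι) : Fin (m.choose (w i).length + 1) :=
    ⟨Nw (w i) p.1, Nat.lt_succ_of_le <| by simpa only [p.2] using Nw_le_choose (w i) p.1⟩
  obtain ⟨p, q, hne, heq⟩ := Fintype.exists_ne_map_eq_of_card_lt counts <| by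
    simpa [card_vector] using h
  exact ⟨p.1, q.1, p.2, q.2, fun e => hne (Subtype.ext e),
    fun i => congrArg Fin.val (congrFun heq i)⟩

theorem add_one_mul_choose_two_add_one_le {m : ℕ} (hm : 2 ≤ m) :
    (m + 1) * (m.choose 2 + 1) ≤ m ^ 3 := by
  have hm' : (2 : ℚ) ≤ m := by exact_mod_cast hm
  suffices h : ((m : ℚ) + 1) * (m * (m - 1) / 2 + 1) ≤ m ^ 3 by
    rw [← Nat.cast_choose_two] at h
    exact_mod_cast h
  nlinarith [mul_nonneg (sub_nonneg.2 hm') (sq_nonneg (m : ℚ))]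

theorem prod_choose_succ_add_one_le {m k : ℕ} (hm : 2 ≤ m) (hk : 2 ≤ k) :
    ∏ j ∈ Finset.range k, (m.choose (j + 1) + 1) ≤ m ^ (k + 1).choose 2 := by
  induction k, hk using Nat.le_induction with
  | base => simpa [Finset.prod_range_succ, Nat.choose] using add_one_mul_choose_two_add_one_le hm
  | succ k hk ih =>
    rw [Finset.prod_range_succ, Nat.choose_succ_succ' (k + 1) 1, Nat.choose_one_right,
      add_comm (k + 1), pow_add]
    exact Nat.mul_le_mul ih (Nat.choose_lt_pow (by omega) (by omega))

theorem card_sigma_fin (k : ℕ) : Fintype.card (Σ n : Fin k, Fin n) = k.choose 2 := by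
  rw [Fintype.card_sigma]
  simp only [Fintype.card_fin]
  rw [← Finset.sum_range (fun i => i), Finset.sum_range_id, Nat.choose_two_right]

theorem prod_choose_length_generator_add_one_le {m k1 : ℕ} (k2 : ℕ) (hm : 2 ≤ m) (hk1 : 2 ≤ k1) :
    ∏ d, (m.choose (generator k1 k2 d).length + 1) ≤
      m ^ ((k1 + 1).choose 2 + k2 * k2.choose 2) := by
  rw [Fintype.prod_sum_type, pow_add]
  refine Nat.mul_le_mul ?_ ?_
  · simpa [generator, Finset.prod_range] using prod_choose_succ_add_one_le hm hk1
  · rw [pow_mul, ← card_sigma_fin]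
    refine Finset.prod_le_pow_card _ _ _ ?_
    rintro ⟨n, a⟩ -
    have ha : (a : ℕ) < n := a.2
    calc m.choose (generator k1 k2 (.inr ⟨n, a⟩)).length + 1
        = m.choose (n + 1) + 1 := by simp [generator]
      _ ≤ m ^ (n + 1 : ℕ) := Nat.choose_lt_pow (by omega) (by omega)
      _ ≤ m ^ k2 := Nat.pow_le_pow_right (by omega) n.2

theorem SU_le_of_pow_lt_two_pow {m k1 k2 : ℕ} (h21 : k2 ≤ k1) (hk1 : 2 ≤ k1) (hm : 2 ≤ m)
    (h : m ^ ((k1 + 1).choose 2 + k2 * k2.choose 2) < 2 ^ m) : SU k1 k2 ≤ m := by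
  obtain ⟨p, q, hp, hq, hne, heq⟩ := exists_ne_forall_Nw_eq (generator k1 k2)
    ((prod_choose_length_generator_add_one_le k2 hm hk1).trans_lt h)
  exact Nat.sInf_le ⟨p, q, hp, hq, hne, equivU_of_generator h21 (hp.trans hq.symm) heq⟩

section Logarithm

open Real

theorem logb_two_add_one_le {x : ℝ} (hx : 2 ≤ x) : logb 2 x + 1 ≤ x := by
  have hbernoulli : x ≤ 2 ^ (x - 1) :=
    calc x = 1 + (x - 1) * 1 := by ring
      _ ≤ (1 + 1) ^ (x - 1) := one_add_mul_self_le_rpow_one_add (by norm_num) (by linarith)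
      _ = 2 ^ (x - 1) := by norm_num
  linarith [(logb_le_iff_le_rpow one_lt_two (by linarith)).2 hbernoulli]

theorem two_le_logb_two {x : ℝ} (hx : 4 ≤ x) : 2 ≤ logb 2 x := by
  rw [le_logb_iff_rpow_le one_lt_two (by linarith), rpow_two]
  linarith

theorem two_le_mul_logb_two_add {κ : ℝ} (hκ : 4 ≤ κ) :
    2 ≤ κ * (logb 2 κ + logb 2 (logb 2 κ) + 1) := by
  have hL : 2 ≤ logb 2 κ := two_le_logb_two hκ
  have hLL : 0 ≤ logb 2 (logb 2 κ) := logb_nonneg one_lt_two (by linarith)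
  nlinarith

theorem mul_logb_two_le_self {κ M : ℝ} (hκ : 4 ≤ κ)
    (hM : M = κ * (logb 2 κ + logb 2 (logb 2 κ) + 1)) : κ * logb 2 M ≤ M := by
  have hL : 2 ≤ logb 2 κ := two_le_logb_two hκ
  have hLL : 0 ≤ logb 2 (logb 2 κ) := logb_nonneg one_lt_two (by linarith)
  have hMle : M ≤ κ * (2 * logb 2 κ) := by
    rw [hM]
    exact mul_le_mul_of_nonneg_left (by linarith [logb_two_add_one_le hL]) (by linarith)
  have hM0 : 0 < M := by rw [hM]; exact mul_pos (by linarith) (by linarith)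
  calc κ * logb 2 M
      ≤ κ * logb 2 (κ * (2 * logb 2 κ)) :=
        mul_le_mul_of_nonneg_left (logb_le_logb_of_le one_lt_two hM0 hMle) (by linarith)
    _ = M := by
        rw [logb_mul (by linarith) (by linarith), logb_mul two_ne_zero (by linarith),
          logb_self_eq_one one_lt_two, hM]
        ring

/-- The gap between `E` and `κ` absorbs the rounding of `M`. -/
theorem floor_pow_lt_two_pow_floor {κ M : ℝ} {E : ℕ} (hE : E + 1 ≤ κ) (hM : 2 ≤ M)
    (h : κ * logb 2 M ≤ M) : ⌊M⌋₊ ^ E < 2 ^ ⌊M⌋₊ := by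
  have hm : (0 : ℝ) < ⌊M⌋₊ := by exact_mod_cast Nat.floor_pos.2 (by linarith)
  have hlogM : 1 ≤ logb 2 M := by
    rwa [le_logb_iff_rpow_le one_lt_two (by linarith), rpow_one]
  have hlog : logb 2 ((⌊M⌋₊ : ℝ) ^ E) < ⌊M⌋₊ :=
    calc logb 2 ((⌊M⌋₊ : ℝ) ^ E)
        = E * logb 2 ⌊M⌋₊ := logb_pow ..
      _ ≤ E * logb 2 M := mul_le_mul_of_nonneg_left
          (logb_le_logb_of_le one_lt_two hm (Nat.floor_le (by linarith))) E.cast_nonneg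
      _ ≤ M - 1 := by nlinarith
      _ < ⌊M⌋₊ := Nat.sub_one_lt_floor M
  rw [logb_lt_iff_lt_rpow one_lt_two (by positivity), rpow_natCast] at hlog
  exact_mod_cast hlog

end Logarithm

theorem cast_choose_two_add_one_le {k1 : ℕ} (k2 : ℕ) (hk1 : 2 ≤ k1) :
    (((k1 + 1).choose 2 + k2 * k2.choose 2 : ℕ) : ℝ) + 1 ≤
      (k1 : ℝ) ^ 2 + (k2 : ℝ) ^ 2 * ((k2 : ℝ) - 1) / 2 := by
  have h : (2 : ℝ) ≤ k1 := by exact_mod_cast hk1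
  push_cast [Nat.cast_choose_two]
  nlinarith

/-- Dudik–Schulman: For `k₁ ≥ k₂ ≥ 2` and
`κ = k₁² + k₂²(k₂-1)/2`, one has `S_U(k₁,k₂) ≤ κ(lg κ + lg lg κ + 1)`. -/
theorem stmt11 (k1 k2 : ℕ) (h21 : k2 ≤ k1) (h2 : 2 ≤ k2) (κ : ℝ)
    (hκ : κ = (k1 : ℝ) ^ 2 + (k2 : ℝ) ^ 2 * ((k2 : ℝ) - 1) / 2) :
    (SU k1 k2 : ℝ) ≤ κ * (Real.logb 2 κ + Real.logb 2 (Real.logb 2 κ) + 1) := by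
  have hk1 : 2 ≤ k1 := h2.trans h21
  have hE := hκ ▸ cast_choose_two_add_one_le k2 hk1
  have hκ4 : 4 ≤ κ := by
    have hchoose : 3 ≤ (k1 + 1).choose 2 := Nat.choose_le_choose 2 (by omega : 3 ≤ k1 + 1)
    have hexp : (3 : ℝ) ≤ ((k1 + 1).choose 2 + k2 * k2.choose 2 : ℕ) := by
      exact_mod_cast Nat.le_add_right_of_le hchoose
    linarith
  set M := κ * (Real.logb 2 κ + Real.logb 2 (Real.logb 2 κ) + 1) with hM
  have hM2 : 2 ≤ M := two_le_mul_logb_two_add hκ4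
  have hpow := floor_pow_lt_two_pow_floor hE hM2 (mul_logb_two_le_self hκ4 hM)
  calc (SU k1 k2 : ℝ)
      ≤ ⌊M⌋₊ := by
        exact_mod_cast SU_le_of_pow_lt_two_pow h21 hk1 (Nat.le_floor (by exact_mod_cast hM2)) hpow
    _ ≤ M := Nat.floor_le (by linarith)
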